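/- Let g = 10. For b ranging over {2, 3, 4, 5, 6, 7, 8, 9, 11, 12} (i.e. 2 ≤ b ≤ 12, b ≠ 10), the total number of solutions (b, ε₁, ε₂, d₁, d₂, l, m, n) of the equations (b+ε₁)·b^n + ε₂ = d₁·(10^l−1)/9 + d₂·(10^m−1)/9, with ε₁, ε₂ ∈ {1, −1}, integers 1 ≤ d₁, d₂ ≤ 9, 1 ≤ l ≤ m and n ≥ 1, is exactly 163; in all of these solutions l ≤ 2, m ≤ 3 and n ≤ 8. One instance is (2−1)·2^8 − 1 = 3·(10²−1)/9 + 2·(10³−1)/9. -/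

import Mathlib

/-- Membership predicate: `(b, ε₁, ε₂, d₁, d₂, l, m, n)` is a solution of
`(b + ε₁)·b^n + ε₂ = d₁·(10^l−1)/9 + d₂·(10^m−1)/9` with `2 ≤ b ≤ 12`, `b ≠ 10`,
`ε₁, ε₂ ∈ {1, −1}`, `1 ≤ d₁, d₂ ≤ 9`, `1 ≤ l ≤ m` and `n ≥ 1`. -/
def SumSol10 (b ε₁ ε₂ d₁ d₂ : ℤ) (l m n : ℕ) : Prop :=
  2 ≤ b ∧ b ≤ 12 ∧ b ≠ 10 ∧
  (ε₁ = 1 ∨ ε₁ = -1) ∧ (ε₂ = 1 ∨ ε₂ = -1) ∧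
  1 ≤ d₁ ∧ d₁ ≤ 9 ∧ 1 ≤ d₂ ∧ d₂ ≤ 9 ∧
  1 ≤ l ∧ l ≤ m ∧ 1 ≤ n ∧
  (b + ε₁) * b ^ n + ε₂ = d₁ * (((10 : ℤ) ^ l - 1) / 9) + d₂ * (((10 : ℤ) ^ m - 1) / 9)

/-!
A solution with `m ≥ 4` is impossible for congruence reasons. For each base `b` there is a modulus
`N` for which the powers of `b` and of `10` have short eventual periods: its prime factors other
than `2` and `5` are among `7`, `11`, `13`, `37`, `41`, modulo which `10` has small order. Modulo a
common divisor `Q > 9` of `N` and `10 ^ 4`, the second repdigit is congruent to `-d₂ / 9`, so `d₂`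
is determined by the other parameters, and running through the periods excludes all of them. Hence
`m ≤ 3`, so the sum of the two repdigits is at most `1998`, which gives `n ≤ 10`, and finitely many
cases remain.
-/

section Periodicity

variable {x N : ℤ} {i j k n : ℕ}

theorem exists_mem_Ico_pow_modEq (hki : k ≤ i) (hij : i < j) (h : x ^ i ≡ x ^ j [ZMOD N])
    (hkn : k ≤ n) : ∃ r ∈ Finset.Ico k j, x ^ n ≡ x ^ r [ZMOD N] := by
  induction n using Nat.strong_induction_on with
  | _ n ih =>
    rcases lt_or_ge n j with hnj | hjn
    · exact ⟨n, Finset.mem_Ico.2 ⟨hkn, hnj⟩, rfl⟩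
    · obtain ⟨a, rfl⟩ := Nat.exists_eq_add_of_le hjn
      obtain ⟨r, hr, hr'⟩ := ih (i + a) (by omega) (by omega)
      refine ⟨r, hr, .trans ?_ hr'⟩
      rw [pow_add, pow_add]
      exact (h.mul_right _).symm

theorem pow_modEq_pow_min {Q : ℤ} (hQ : Q ∣ x ^ k) (l : ℕ) : x ^ l ≡ x ^ min l k [ZMOD Q] := by
  rcases le_total l k with hlk | hkl
  · rw [min_eq_left hlk]
  · rw [min_eq_right hkl]
    exact (Int.modEq_zero_iff_dvd.2 (hQ.trans (pow_dvd_pow x hkl))).trans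
      (Int.modEq_zero_iff_dvd.2 hQ).symm

end Periodicity

section Repdigits

/-- The repunit `11⋯1` with `l` decimal digits; the division is exact. -/
def repunit (l : ℕ) : ℤ := (10 ^ l - 1) / 9

/-- The sum of the repdigits `d₁⋯d₁` and `d₂⋯d₂` with `l` and `m` decimal digits. -/
def repdigitSum (d₁ d₂ : ℤ) (l m : ℕ) : ℤ := d₁ * repunit l + d₂ * repunit m

/-- The Thabit (`ε₁ = 1`) or Williams (`ε₁ = -1`) number `(b + ε₁)·b^n + ε₂` in base `b`. -/
def thabitWilliams (b ε₁ ε₂ : ℤ) (n : ℕ) : ℤ := (b + ε₁) * b ^ n + ε₂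

variable {b ε₁ ε₂ d₁ d₂ : ℤ} {l m n : ℕ}

theorem nine_mul_repunit (l : ℕ) : 9 * repunit l = 10 ^ l - 1 :=
  Int.mul_ediv_cancel' (by simpa using sub_dvd_pow_sub_pow (10 : ℤ) 1 l)

theorem nine_mul_repdigitSum (d₁ d₂ : ℤ) (l m : ℕ) :
    9 * repdigitSum d₁ d₂ l m = d₁ * (10 ^ l - 1) + d₂ * (10 ^ m - 1) := by
  rw [← nine_mul_repunit, ← nine_mul_repunit, repdigitSum]
  ring

theorem repdigitSum_le (hd₁ : d₁ ≤ 9) (hd₂ : d₂ ≤ 9) (hlm : l ≤ m) :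
    repdigitSum d₁ d₂ l m ≤ 2 * (10 ^ m - 1) := by
  have one_le_pow (k : ℕ) : (1 : ℤ) ≤ 10 ^ k := one_le_pow₀ (by norm_num)
  have pow_le_pow : (10 : ℤ) ^ l ≤ 10 ^ m := pow_le_pow_right₀ (by norm_num) hlm
  have : 9 * repdigitSum d₁ d₂ l m ≤ 9 * (2 * (10 ^ m - 1)) := calc
    9 * repdigitSum d₁ d₂ l m = d₁ * (10 ^ l - 1) + d₂ * (10 ^ m - 1) := nine_mul_repdigitSum ..
    _ ≤ 9 * (10 ^ l - 1) + 9 * (10 ^ m - 1) := by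
      gcongr <;> linarith [one_le_pow l, one_le_pow m]
    _ ≤ 9 * (2 * (10 ^ m - 1)) := by linarith
  linarith

theorem two_pow_le_thabitWilliams (hb : 2 ≤ b) (hε₁ : -1 ≤ ε₁) (hε₂ : -1 ≤ ε₂) (n : ℕ) :
    2 ^ n ≤ thabitWilliams b ε₁ ε₂ n + 1 := by
  have : (2 : ℤ) ^ n ≤ (b + ε₁) * b ^ n := calc
    (2 : ℤ) ^ n ≤ b ^ n := by gcongr
    _ ≤ (b + ε₁) * b ^ n := le_mul_of_one_le_left (by positivity) (by linarith)
  unfold thabitWilliams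
  linarith

end Repdigits

section Obstruction

/-- The signs allowed for `ε₁` and `ε₂`. -/
def signs : Finset ℤ := {1, -1}

/-- The nonzero decimal digits. -/
noncomputable def digits : Finset ℤ := Finset.Icc 1 9

/-- The residue modulo `Q` which the equation `v = repdigitSum d₁ d₂ l m` leaves for `d₂` when
`Q ∣ 10 ^ 4` and `4 ≤ m`; here `k` stands for `min l 4`. -/
def secondDigit (Q v d₁ : ℤ) (k : ℕ) : ℤ := (d₁ * (10 ^ k - 1) - 9 * v) % Q

/-- A certificate that `thabitWilliams b ε₁ ε₂ n = repdigitSum d₁ d₂ l m`, multiplied by `9`, fails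
modulo `N` for all `n, l ≥ 1` and `m ≥ 4`. Modulo `N` the powers of `b` repeat from `b ^ i = b ^ j`
on and those of `10` from `10 ^ s = 10 ^ t` on, so finitely many exponents are to be excluded. The
divisor `Q` of `N` serves to read off `d₂` from the other parameters; the bound `d₂ ≤ 9`, which
discards most cases, is tested first. -/
structure CongruenceObstruction (b Q N : ℤ) (i j s t : ℕ) : Prop where
  one_le : 1 ≤ i
  base_lt : i < j
  base_pow : b ^ i ≡ b ^ j [ZMOD N]
  four_le : 4 ≤ s
  ten_lt : s < t
  ten_pow : 10 ^ s ≡ 10 ^ t [ZMOD N]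
  nine_lt : 9 < Q
  dvd_ten_pow : Q ∣ 10 ^ 4
  dvd : Q ∣ N
  not_modEq : ∀ n ∈ Finset.Ico 1 j, ∀ ε₁ ∈ signs, ∀ ε₂ ∈ signs,
    ∀ d₁ ∈ digits, ∀ k ∈ Finset.Icc 1 4,
      secondDigit Q (thabitWilliams b ε₁ ε₂ n) d₁ k ≤ 9 →
      1 ≤ secondDigit Q (thabitWilliams b ε₁ ε₂ n) d₁ k →
      ∀ l ∈ Finset.Ico k t, min l 4 = k → ∀ m ∈ Finset.Ico 4 t,
        ¬ 9 * thabitWilliams b ε₁ ε₂ n ≡ d₁ * (10 ^ l - 1) +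
          secondDigit Q (thabitWilliams b ε₁ ε₂ n) d₁ k * (10 ^ m - 1) [ZMOD N]

variable {b ε₁ ε₂ d₁ d₂ Q N v : ℤ} {i j s t l m n : ℕ}

theorem eq_secondDigit (hQ : 9 < Q) (hQ10 : Q ∣ 10 ^ 4) (hd₂ : d₂ ∈ digits) (hm : 4 ≤ m)
    (h : 9 * v ≡ d₁ * (10 ^ l - 1) + d₂ * (10 ^ m - 1) [ZMOD Q]) :
    d₂ = secondDigit Q v d₁ (min l 4) := by
  obtain ⟨hd₂_pos, hd₂_le⟩ := Finset.mem_Icc.1 hd₂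
  have hl : 10 ^ l ≡ 10 ^ min l 4 [ZMOD Q] := pow_modEq_pow_min hQ10 l
  have hm0 : 10 ^ m ≡ 0 [ZMOD Q] := Int.modEq_zero_iff_dvd.2 (hQ10.trans (pow_dvd_pow 10 hm))
  have : d₂ ≡ d₁ * (10 ^ min l 4 - 1) - 9 * v [ZMOD Q] := calc
    d₂ = d₁ * (10 ^ l - 1) - (d₁ * (10 ^ l - 1) + d₂ * (10 ^ m - 1)) + d₂ * 10 ^ m := by ring
    _ ≡ d₁ * (10 ^ min l 4 - 1) - 9 * v + d₂ * 0 [ZMOD Q] := by gcongr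
    _ = d₁ * (10 ^ min l 4 - 1) - 9 * v := by ring
  rw [secondDigit, ← this.eq, Int.emod_eq_of_lt (by linarith) (by linarith)]

theorem CongruenceObstruction.lt_four (hb : CongruenceObstruction b Q N i j s t)
    (hε₁ : ε₁ ∈ signs) (hε₂ : ε₂ ∈ signs) (hd₁ : d₁ ∈ digits) (hd₂ : d₂ ∈ digits)
    (hn : 1 ≤ n) (hl : 1 ≤ l) (h : thabitWilliams b ε₁ ε₂ n = repdigitSum d₁ d₂ l m) : m < 4 := by
  by_contra! hm
  obtain ⟨n', hn', hbn⟩ := exists_mem_Ico_pow_modEq hb.one_le hb.base_lt hb.base_pow hn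
  obtain ⟨l', hl', h10l⟩ :=
    exists_mem_Ico_pow_modEq (le_trans (by norm_num) hb.four_le) hb.ten_lt hb.ten_pow hl
  obtain ⟨m', hm', h10m⟩ := exists_mem_Ico_pow_modEq hb.four_le hb.ten_lt hb.ten_pow hm
  have hN : 9 * thabitWilliams b ε₁ ε₂ n' ≡ d₁ * (10 ^ l' - 1) + d₂ * (10 ^ m' - 1) [ZMOD N] := calc
    9 * thabitWilliams b ε₁ ε₂ n' ≡ 9 * thabitWilliams b ε₁ ε₂ n [ZMOD N] := by
      unfold thabitWilliams; gcongr
    _ = d₁ * (10 ^ l - 1) + d₂ * (10 ^ m - 1) := by rw [h, nine_mul_repdigitSum]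
    _ ≡ d₁ * (10 ^ l' - 1) + d₂ * (10 ^ m' - 1) [ZMOD N] := by gcongr
  have hd₂_eq := eq_secondDigit hb.nine_lt hb.dvd_ten_pow hd₂ (Finset.mem_Ico.1 hm').1
    (hN.of_dvd hb.dvd)
  obtain ⟨hd₂_pos, hd₂_le⟩ := Finset.mem_Icc.1 hd₂
  obtain ⟨hl'_pos, hl'_lt⟩ := Finset.mem_Ico.1 hl'
  refine hb.not_modEq n' hn' ε₁ hε₁ ε₂ hε₂ d₁ hd₁ (min l' 4) (Finset.mem_Icc.2 (by omega))
    (hd₂_eq ▸ hd₂_le) (hd₂_eq ▸ hd₂_pos) l' (Finset.mem_Ico.2 (by omega)) rfl m' hm' ?_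
  rwa [← hd₂_eq]

/-- The admissible bases. -/
noncomputable def bases : Finset ℤ := (Finset.Icc 2 12).erase 10

theorem mem_bases : b ∈ bases ↔ 2 ≤ b ∧ b ≤ 12 ∧ b ≠ 10 := by
  simp only [bases, Finset.mem_erase, Finset.mem_Icc]
  tauto

theorem exists_congruenceObstruction (hb : b ∈ bases) :
    ∃ Q N i j s t, CongruenceObstruction b Q N i j s t := by
  obtain ⟨hb2, hb12, hb10⟩ := mem_bases.1 hb
  interval_cases b
  · exact ⟨80, 640 * 7 * 13, 7, 19, 7, 13, by constructor <;> decide +kernel⟩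
  · exact ⟨400, 800 * 11, 1, 41, 5, 7, by constructor <;> decide +kernel⟩
  · exact ⟨400, 1600 * 11, 3, 13, 6, 8, by constructor <;> decide +kernel⟩
  · exact ⟨10000, 10000 * 11, 4, 24, 4, 6, by constructor <;> decide +kernel⟩
  · exact ⟨400, 400 * 11, 4, 14, 4, 6, by constructor <;> decide +kernel⟩
  · exact ⟨400, 800 * 11 * 41, 1, 41, 5, 15, by constructor <;> decide +kernel⟩
  · exact ⟨80, 640 * 37, 3, 15, 7, 10, by constructor <;> decide +kernel⟩
  · exact ⟨80, 320 * 41, 1, 9, 6, 11, by constructor <;> decide +kernel⟩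
  · exact absurd rfl hb10
  · exact ⟨80, 160 * 13 * 37, 1, 25, 5, 11, by constructor <;> decide +kernel⟩
  · exact ⟨80, 160 * 11 * 13, 3, 7, 5, 11, by constructor <;> decide +kernel⟩

end Obstruction

section Search

/-- The parameters `(b, ε₁, ε₂, n)` with `n ≤ 10` of the Thabit and Williams numbers up to `1998`,
which is the largest sum of two repdigits with at most three digits. Irreducible, lest elaboration
try to enumerate it. -/
@[irreducible] noncomputable def smallThabitWilliams : Finset (ℤ × ℤ × ℤ × ℕ) :=
  (bases ×ˢ signs ×ˢ signs ×ˢ Finset.Icc 1 10).filter fun (b, ε₁, ε₂, n) ↦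
    thabitWilliams b ε₁ ε₂ n ≤ 1998

/-- The parameters `(d₁, d₂, l, m)` of the sums of two repdigits with at most three digits. -/
noncomputable def smallRepdigitSums : Finset (ℤ × ℤ × ℕ × ℕ) :=
  digits ×ˢ digits ×ˢ (Finset.Icc 1 3 ×ˢ Finset.Icc 1 3).filter fun (l, m) ↦ l ≤ m

/-- The solutions `(b, ε₁, ε₂, d₁, d₂, l, m, n)`, with the parameters of the left-hand side grouped
before those of the right-hand side. -/
noncomputable def solutions : Finset (Σ _ : ℤ × ℤ × ℤ × ℕ, ℤ × ℤ × ℕ × ℕ) :=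
  smallThabitWilliams.sigma fun (b, ε₁, ε₂, n) ↦ smallRepdigitSums.filter fun (d₁, d₂, l, m) ↦
    thabitWilliams b ε₁ ε₂ n = repdigitSum d₁ d₂ l m

theorem card_solutions : solutions.card = 163 := by
  rw [solutions, Finset.card_sigma]
  decide +kernel

theorem le_of_mem_solutions : ∀ x ∈ solutions, x.2.2.2.1 ≤ 2 ∧ x.2.2.2.2 ≤ 3 ∧ x.1.2.2.2 ≤ 8 := by
  decide +kernel

variable {b ε₁ ε₂ d₁ d₂ : ℤ} {l m n : ℕ}

theorem sumSol10_iff :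
    SumSol10 b ε₁ ε₂ d₁ d₂ l m n ↔
      (b ∈ bases ∧ ε₁ ∈ signs ∧ ε₂ ∈ signs ∧ 1 ≤ n) ∧ (d₁ ∈ digits ∧ d₂ ∈ digits ∧ 1 ≤ l ∧ l ≤ m) ∧
        thabitWilliams b ε₁ ε₂ n = repdigitSum d₁ d₂ l m := by
  simp only [SumSol10, mem_bases, signs, digits, Finset.mem_insert, Finset.mem_singleton,
    Finset.mem_Icc, thabitWilliams, repdigitSum, repunit]
  tauto

theorem mem_solutions_iff :
    ⟨(b, ε₁, ε₂, n), (d₁, d₂, l, m)⟩ ∈ solutions ↔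
      SumSol10 b ε₁ ε₂ d₁ d₂ l m n ∧ m ≤ 3 ∧ n ≤ 10 ∧ thabitWilliams b ε₁ ε₂ n ≤ 1998 := by
  simp only [solutions, smallThabitWilliams, smallRepdigitSums, sumSol10_iff, Finset.mem_sigma,
    Finset.mem_filter, Finset.mem_product, Finset.mem_Icc]
  grind

theorem SumSol10.le_three (h : SumSol10 b ε₁ ε₂ d₁ d₂ l m n) : m ≤ 3 := by
  obtain ⟨⟨hb, hε₁, hε₂, hn⟩, ⟨hd₁, hd₂, hl, -⟩, heq⟩ := sumSol10_iff.1 h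
  obtain ⟨Q, N, i, j, s, t, hobs⟩ := exists_congruenceObstruction hb
  exact Nat.le_of_lt_succ (hobs.lt_four hε₁ hε₂ hd₁ hd₂ hn hl heq)

theorem SumSol10.thabitWilliams_le (h : SumSol10 b ε₁ ε₂ d₁ d₂ l m n) :
    thabitWilliams b ε₁ ε₂ n ≤ 1998 := by
  obtain ⟨-, ⟨hd₁, hd₂, -, hlm⟩, heq⟩ := sumSol10_iff.1 h
  calc
    thabitWilliams b ε₁ ε₂ n = repdigitSum d₁ d₂ l m := heq
    _ ≤ 2 * (10 ^ m - 1) := repdigitSum_le (Finset.mem_Icc.1 hd₁).2 (Finset.mem_Icc.1 hd₂).2 hlm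
    _ ≤ 2 * (10 ^ 3 - 1) := by gcongr; exacts [by norm_num, h.le_three]
    _ = 1998 := by norm_num

theorem SumSol10.le_ten (h : SumSol10 b ε₁ ε₂ d₁ d₂ l m n) : n ≤ 10 := by
  obtain ⟨⟨hb, hε₁, hε₂, -⟩, -⟩ := sumSol10_iff.1 h
  have neg_one_le {ε : ℤ} (hε : ε ∈ signs) : -1 ≤ ε := by
    revert ε; decide
  have : (2 : ℤ) ^ n < 2 ^ 11 := by
    linarith [two_pow_le_thabitWilliams (mem_bases.1 hb).1 (neg_one_le hε₁) (neg_one_le hε₂) n,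
      h.thabitWilliams_le]
  exact Nat.le_of_lt_succ ((pow_lt_pow_iff_right₀ (by norm_num)).1 this)

theorem sumSol10_iff_mem_solutions :
    SumSol10 b ε₁ ε₂ d₁ d₂ l m n ↔ ⟨(b, ε₁, ε₂, n), (d₁, d₂, l, m)⟩ ∈ solutions := by
  rw [mem_solutions_iff]
  exact ⟨fun h ↦ ⟨h, h.le_three, h.le_ten, h.thabitWilliams_le⟩, And.left⟩

/-- Puts the parameters of a solution into the order `(b, ε₁, ε₂, d₁, d₂, l, m, n)`. -/
def toTuple : (Σ _ : ℤ × ℤ × ℤ × ℕ, ℤ × ℤ × ℕ × ℕ) → ℤ × ℤ × ℤ × ℤ × ℤ × ℕ × ℕ × ℕ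
  | ⟨(b, ε₁, ε₂, n), (d₁, d₂, l, m)⟩ => (b, ε₁, ε₂, d₁, d₂, l, m, n)

theorem toTuple_injective : Function.Injective toTuple := by
  rintro ⟨⟨b, ε₁, ε₂, n⟩, d₁, d₂, l, m⟩ ⟨⟨b', ε₁', ε₂', n'⟩, d₁', d₂', l', m'⟩ h
  simp_all [toTuple]

theorem setOf_sumSol10_eq_image :
    {x : ℤ × ℤ × ℤ × ℤ × ℤ × ℕ × ℕ × ℕ |
        SumSol10 x.1 x.2.1 x.2.2.1 x.2.2.2.1 x.2.2.2.2.1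
          x.2.2.2.2.2.1 x.2.2.2.2.2.2.1 x.2.2.2.2.2.2.2} = toTuple '' solutions := by
  ext ⟨b, ε₁, ε₂, d₁, d₂, l, m, n⟩
  constructor
  · exact fun h ↦ ⟨_, sumSol10_iff_mem_solutions.1 h, rfl⟩
  · rintro ⟨⟨⟨b', ε₁', ε₂', n'⟩, d₁', d₂', l', m'⟩, hx, hxy⟩
    cases hxy
    exact sumSol10_iff_mem_solutions.2 hx

end Search

/-- For `g = 10` and `2 ≤ b ≤ 12`, `b ≠ 10`: the equations
`(b ± 1)·b^n ± 1 = d₁·(10^l−1)/9 + d₂·(10^m−1)/9` have exactly `163` solutions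
with `n ≥ 1`; in all of them `l ≤ 2`, `m ≤ 3` and `n ≤ 8`. One instance is
`(2−1)·2^8 − 1 = 3·(10²−1)/9 + 2·(10³−1)/9`. -/
theorem stmt_17 :
    {x : ℤ × ℤ × ℤ × ℤ × ℤ × ℕ × ℕ × ℕ |
        SumSol10 x.1 x.2.1 x.2.2.1 x.2.2.2.1 x.2.2.2.2.1
          x.2.2.2.2.2.1 x.2.2.2.2.2.2.1 x.2.2.2.2.2.2.2}.ncard = 163 ∧
    (∀ (b ε₁ ε₂ d₁ d₂ : ℤ) (l m n : ℕ),
      SumSol10 b ε₁ ε₂ d₁ d₂ l m n → l ≤ 2 ∧ m ≤ 3 ∧ n ≤ 8) ∧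
    ((2 : ℤ) - 1) * 2 ^ 8 - 1 =
      3 * (((10 : ℤ) ^ 2 - 1) / 9) + 2 * (((10 : ℤ) ^ 3 - 1) / 9) := by
  refine ⟨?_, fun b ε₁ ε₂ d₁ d₂ l m n h ↦ ?_, by norm_num⟩
  · rw [setOf_sumSol10_eq_image, Set.ncard_image_of_injective _ toTuple_injective,
      Set.ncard_coe_finset, card_solutions]
  · exact le_of_mem_solutions ⟨(b, ε₁, ε₂, n), (d₁, d₂, l, m)⟩
      (sumSol10_iff_mem_solutions.1 h)
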